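/- (Moser's inequality.) There exists a constant C > 0, depending only on n, p, α, C₁ and C₂, with the following property: let r > 0, z ∈ ℝⁿ, and let v be a bounded nonnegative C¹ function on the open ball B_r(z) which is a solution of div A(x,Dv) + b(x)|Dv|^α ≥ 0 in B_r(z) and satisfies r^{p−α}·(sup_{B_r(z)} v)^{α−p+1}·(ess sup_{B_r(z)} b) ≤ C₁/2. Then sup_{B_{r/2}(z)} v ≤ C·r^{−n/p}·(∫_{B_r(z)} v(x)^p dx)^{1/p}. -/

import Mathlib

open MeasureTheory Metric Set Filter
open scoped RealInnerProductSpace ENNReal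

noncomputable section

abbrev Euc (n : ℕ) := EuclideanSpace ℝ (Fin n)

/-- Weak solution of `div A(x,Dv) + b(x)|Dv|^α ≥ a(x)` on an open set `U`:
for every nonnegative test function `φ ∈ C₀^∞(U)`,
`-∫ A(x,Dv)·Dφ + ∫ b |Dv|^α φ ≥ ∫ a φ`. -/
def IsWeakSol {n : ℕ} (A : Euc n → Euc n → Euc n) (b : Euc n → ℝ) (α : ℝ)
    (a : Euc n → ℝ) (U : Set (Euc n)) (v : Euc n → ℝ) : Prop :=
  ∀ φ : Euc n → ℝ, ContDiff ℝ (⊤ : ℕ∞) φ → HasCompactSupport φ → tsupport φ ⊆ U →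
    (∀ x, 0 ≤ φ x) →
    (∫ x in U, a x * φ x) ≤
      (-(∫ x in U, ⟪A x (gradient v x), gradient φ x⟫)) +
        ∫ x in U, b x * ‖gradient v x‖ ^ α * φ x

/-- Structural conditions on `A`: measurability, coercivity and growth. -/
def StructCond {n : ℕ} (A : Euc n → Euc n → Euc n) (p C₁ C₂ : ℝ) : Prop :=
  Measurable (Function.uncurry A) ∧
    ∀ x ζ : Euc n, C₁ * ‖ζ‖ ^ p ≤ ⟪ζ, A x ζ⟫ ∧ ‖A x ζ‖ ≤ C₂ * ‖ζ‖ ^ (p - 1)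

/-- Locally bounded function on `ℝⁿ`. -/
def LocBdd {n : ℕ} (b : Euc n → ℝ) : Prop :=
  ∀ K : Set (Euc n), IsCompact K → ∃ C, ∀ x ∈ K, b x ≤ C

/-- `M(r; u) = max_{|x| = r} u x`. -/
def sphMax {n : ℕ} (u : Euc n → ℝ) (r : ℝ) : ℝ := sSup (u '' Metric.sphere (0 : Euc n) r)

/-- `g_θ(t) = inf_{s ∈ (t/θ, θ t)} g s`. -/
def ginf (g : ℝ → ℝ) (θ t : ℝ) : ℝ := sInf (g '' Set.Ioo (t / θ) (θ * t))

/-- The open annulus `{x : r₁ < |x| < r₂}`. -/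
def Ann (n : ℕ) (r₁ r₂ : ℝ) : Set (Euc n) := {x : Euc n | r₁ < ‖x‖ ∧ ‖x‖ < r₂}

/-- `q_σ(r) = ess inf_{r/σ < |x| < σ r} q x`. -/
def qinf {n : ℕ} (q : Euc n → ℝ) (σ r : ℝ) : ℝ :=
  essInf q (volume.restrict (Ann n (r / σ) (σ * r)))

/-- `f_σ(r) = q_σ(r) / (1 + r q_σ(r)^{(α-p+1)/α} ess sup_{r/σ<|x|<σr} b^{(p-1)/α})`. -/
def fdef {n : ℕ} (q b : Euc n → ℝ) (p α σ r : ℝ) : ℝ :=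
  qinf q σ r /
    (1 + r * qinf q σ r ^ ((α - p + 1) / α) *
      essSup (fun x => b x ^ ((p - 1) / α)) (volume.restrict (Ann n (r / σ) (σ * r))))

/-!
Moser iteration. The smallness condition allows the term `b |Dv|^α` to be absorbed, by Young's
inequality, into half of the coercivity and a term of size `v / r`. Testing the weak inequality
with `η ^ p * v ^ (δ + 1)`, where `η` is a cutoff, then bounds the weighted gradient of `v` by
`v` itself, and the Sobolev inequality `W^{1,1} ⊆ L^{n/(n-1)}` applied to `η ^ p * v ^ γ` gives
a reverse Hölder inequality which multiplies the exponent of integrability by `χ = n/(n-1)` on a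
smaller ball. Iterating it along the radii `r (1/2 + 2^{-k}/4)` and the exponents `p χ ^ k`, the
constants converge and the limit `k → ∞` is the supremum bound.
-/

section RealInequalities

theorem rpow_mul_rpow_le_rpow_add_rpow {x y a b : ℝ} (hx : 0 ≤ x) (hy : 0 ≤ y) (ha : 0 ≤ a)
    (hb : 0 ≤ b) : x ^ a * y ^ b ≤ x ^ (a + b) + y ^ (a + b) := by
  rcases le_total x y with hxy | hyx
  · calc x ^ a * y ^ b ≤ y ^ a * y ^ b := by gcongr
      _ = y ^ (a + b) := (Real.rpow_add_of_nonneg hy ha hb).symm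
      _ ≤ x ^ (a + b) + y ^ (a + b) := le_add_of_nonneg_left (by positivity)
  · calc x ^ a * y ^ b ≤ x ^ a * x ^ b := by gcongr
      _ = x ^ (a + b) := (Real.rpow_add_of_nonneg hx ha hb).symm
      _ ≤ x ^ (a + b) + y ^ (a + b) := le_add_of_nonneg_right (by positivity)

theorem rpow_sub_one_mul_le_rpow_add_rpow {p x y : ℝ} (hp : 1 ≤ p) (hx : 0 ≤ x) (hy : 0 ≤ y) :
    x ^ (p - 1) * y ≤ x ^ p + y ^ p := by
  simpa using rpow_mul_rpow_le_rpow_add_rpow hx hy (sub_nonneg.2 hp) zero_le_one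

theorem mul_rpow_mul_le_of_scaled_bound {p α c r M B b t v : ℝ} (hp : 1 ≤ p) (hα : p - 1 ≤ α)
    (hα' : α ≤ p) (hr : 0 < r) (hb : 0 ≤ b) (hbB : b ≤ B) (ht : 0 ≤ t) (hv : 0 ≤ v) (hvM : v ≤ M)
    (hsmall : r ^ (p - α) * M ^ (α - p + 1) * B ≤ c) :
    b * t ^ α * v ≤ c * (t ^ p + t ^ (p - 1) * (r⁻¹ * v)) := by
  have hα₀ : 0 ≤ α - p + 1 := by linarith
  have hα₁ : 0 ≤ p - α := by linarith
  have ht_split : t ^ α = t ^ (p - 1) * t ^ (α - p + 1) := by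
    rw [← Real.rpow_add_of_nonneg ht (by linarith) hα₀]; ring_nf
  have hv_split : v = v ^ (α - p + 1) * (r ^ (p - α) * (r⁻¹ * v) ^ (p - α)) := by
    rw [← Real.mul_rpow hr.le (by positivity), mul_inv_cancel_left₀ hr.ne',
      ← Real.rpow_add_of_nonneg hv hα₀ hα₁]
    ring_nf
    rw [Real.rpow_one]
  have hyoung : t ^ (α - p + 1) * (r⁻¹ * v) ^ (p - α) ≤ t + r⁻¹ * v := by
    have := rpow_mul_rpow_le_rpow_add_rpow ht (mul_nonneg (inv_nonneg.2 hr.le) hv) hα₀ hα₁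
    rwa [show α - p + 1 + (p - α) = 1 by ring, Real.rpow_one, Real.rpow_one] at this
  have hcoef : b * v ^ (α - p + 1) * r ^ (p - α) ≤ c := by
    calc b * v ^ (α - p + 1) * r ^ (p - α) ≤ B * M ^ (α - p + 1) * r ^ (p - α) := by
          have := hb.trans hbB
          gcongr
      _ ≤ c := by linarith
  calc b * t ^ α * v
      = (b * v ^ (α - p + 1) * r ^ (p - α)) *
          (t ^ (p - 1) * (t ^ (α - p + 1) * (r⁻¹ * v) ^ (p - α))) := by
        rw [ht_split]
        nth_rw 1 [hv_split]
        ring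
    _ ≤ c * (t ^ (p - 1) * (t + r⁻¹ * v)) := by
        gcongr
        exact le_trans (by positivity) hcoef
    _ = c * (t ^ p + t ^ (p - 1) * (r⁻¹ * v)) := by
        rw [mul_add, ← Real.rpow_add_one' ht (by linarith : 0 < p - 1 + 1).ne', sub_add_cancel]

/-- The factor `Λ` in the Caccioppoli inequality `‖η |Dv|‖ ≤ Λ T ‖v‖` (in weighted `L^p` norms)
for a cutoff `η` with `|Dη| ≤ T`. -/
def caccioppoliConst (p C₁ C₂ : ℝ) : ℝ := 2 + 4 * p * C₂ / C₁

theorem caccioppoliConst_nonneg {p C₁ C₂ : ℝ} (hp : 0 ≤ p) (hC₁ : 0 ≤ C₁) (hC₂ : 0 ≤ C₂) :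
    0 ≤ caccioppoliConst p C₁ C₂ := by
  unfold caccioppoliConst
  positivity

/-- With `t = |Dv|`, `e = η`, `i = ⟪Dv, F⟫` and `j = ⟪F, Dη⟫`, the left-hand side is, up to a weight
`v ^ δ`, the integrand of the weak inequality tested with `η ^ p * v ^ β`, where `β = δ + 1`. -/
theorem caccioppoli_integrand_le {p C₁ C₂ s T β g t v e i j : ℝ} (hp : 1 ≤ p) (hC₁ : 0 < C₁)
    (hC₂ : 0 ≤ C₂) (hβ : 1 ≤ β) (he : 0 ≤ e) (he' : e ≤ 1) (ht : 0 ≤ t) (hv : 0 ≤ v) (hT : 0 ≤ T)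
    (hs : s ≤ T) (hg : g * v ≤ C₁ / 2 * (t ^ p + t ^ (p - 1) * (s * v)))
    (hi : C₁ * t ^ p ≤ i) (hj : -(C₂ * t ^ (p - 1) * T) ≤ j) :
    e ^ p * (g * v) - (β * e ^ p * i + p * e ^ (p - 1) * v * j) ≤
      C₁ / 4 * ((caccioppoliConst p C₁ C₂ * T * v) ^ p - (e * t) ^ p) := by
  set Λ := caccioppoliConst p C₁ C₂ with hΛ
  have hsource : e ^ p * (g * v) ≤ e ^ p * (C₁ / 2 * (t ^ p + t ^ (p - 1) * (T * v))) := by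
    refine mul_le_mul_of_nonneg_left (hg.trans ?_) (by positivity)
    gcongr
  have hcoercive : e ^ p * (C₁ * t ^ p) ≤ β * e ^ p * i := by
    calc e ^ p * (C₁ * t ^ p) ≤ e ^ p * i := by gcongr
      _ ≤ β * (e ^ p * i) :=
        le_mul_of_one_le_left (mul_nonneg (by positivity) (le_trans (by positivity) hi)) hβ
      _ = β * e ^ p * i := by ring
  have hgrowth : -(p * e ^ (p - 1) * v * j) ≤ p * C₂ * ((e * t) ^ (p - 1) * (T * v)) := by
    have : p * e ^ (p - 1) * v * -(C₂ * t ^ (p - 1) * T) ≤ p * e ^ (p - 1) * v * j := by gcongr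
    rw [Real.mul_rpow he ht]
    linarith
  have hcutoff : e ^ p * t ^ (p - 1) * (T * v) ≤ (e * t) ^ (p - 1) * (T * v) := by
    rw [Real.mul_rpow he ht]
    gcongr ?_ * _ * _
    exact Real.rpow_le_rpow_of_exponent_ge' he he' (by linarith) (by linarith)
  have hyoung : (e * t) ^ (p - 1) * (Λ * T * v) ≤ (e * t) ^ p + (Λ * T * v) ^ p :=
    rpow_sub_one_mul_le_rpow_add_rpow hp (by positivity)
      (mul_nonneg (mul_nonneg (caccioppoliConst_nonneg (by linarith) hC₁.le hC₂) hT) hv)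
  have hΛ_mul : C₁ / 4 * Λ = C₁ / 2 + p * C₂ := by
    rw [hΛ, caccioppoliConst]
    field_simp
    ring
  have hmul : e ^ p * t ^ p = (e * t) ^ p := (Real.mul_rpow he ht).symm
  calc e ^ p * (g * v) - (β * e ^ p * i + p * e ^ (p - 1) * v * j)
      ≤ -(C₁ / 2) * (e ^ p * t ^ p) + C₁ / 2 * (e ^ p * t ^ (p - 1) * (T * v))
          + p * C₂ * ((e * t) ^ (p - 1) * (T * v)) := by linarith
    _ ≤ -(C₁ / 2) * (e * t) ^ p + C₁ / 2 * ((e * t) ^ (p - 1) * (T * v))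
          + p * C₂ * ((e * t) ^ (p - 1) * (T * v)) := by
        rw [hmul]
        gcongr
    _ = -(C₁ / 2) * (e * t) ^ p + C₁ / 4 * ((e * t) ^ (p - 1) * (Λ * T * v)) := by
        linear_combination (-((e * t) ^ (p - 1) * T * v)) * hΛ_mul
    _ ≤ -(C₁ / 2) * (e * t) ^ p + C₁ / 4 * ((e * t) ^ p + (Λ * T * v) ^ p) := by gcongr
    _ = C₁ / 4 * ((Λ * T * v) ^ p - (e * t) ^ p) := by ring

/-- With `t = |Dv|` and `e = η`, the left-hand side bounds, up to a weight `v ^ (γ - p)`, the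
gradient of `η ^ p * v ^ γ`. -/
theorem sobolev_integrand_le {p T γ t v e : ℝ} (hp : 1 ≤ p) (hγ : 0 ≤ γ) (he : 0 ≤ e)
    (he' : e ≤ 1) (ht : 0 ≤ t) (hv : 0 ≤ v) (hT : 0 < T) :
    γ * e ^ p * v ^ (p - 1) * t + p * e ^ (p - 1) * v ^ p * T ≤
      T ^ (1 - p) * ((γ + p) * (T * v) ^ p + γ * (e * t) ^ p) := by
  have hyoung : v ^ (p - 1) * t ≤ T ^ (1 - p) * ((T * v) ^ p + t ^ p) := by
    calc v ^ (p - 1) * t = T ^ (1 - p) * ((T * v) ^ (p - 1) * t) := by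
          rw [Real.mul_rpow hT.le hv, ← neg_sub p 1, Real.rpow_neg hT.le]
          field_simp
      _ ≤ T ^ (1 - p) * ((T * v) ^ p + t ^ p) := by
          gcongr
          exact rpow_sub_one_mul_le_rpow_add_rpow hp (by positivity) ht
  have hTv : v ^ p * T = T ^ (1 - p) * (T * v) ^ p := by
    rw [Real.mul_rpow hT.le hv, ← mul_assoc, ← Real.rpow_add hT]
    norm_num [mul_comm]
  have he_p : e ^ p ≤ 1 := Real.rpow_le_one he he' (by linarith)
  have he_p' : e ^ (p - 1) ≤ 1 := Real.rpow_le_one he he' (by linarith)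
  calc γ * e ^ p * v ^ (p - 1) * t + p * e ^ (p - 1) * v ^ p * T
      = γ * e ^ p * (v ^ (p - 1) * t) + p * e ^ (p - 1) * (v ^ p * T) := by ring
    _ ≤ γ * e ^ p * (T ^ (1 - p) * ((T * v) ^ p + t ^ p))
          + p * 1 * (T ^ (1 - p) * (T * v) ^ p) := by
        rw [hTv]
        gcongr
    _ = T ^ (1 - p) * ((γ * e ^ p + p) * (T * v) ^ p + γ * (e * t) ^ p) := by
        rw [Real.mul_rpow he ht]
        ring
    _ ≤ T ^ (1 - p) * ((γ + p) * (T * v) ^ p + γ * (e * t) ^ p) := by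
        gcongr
        exact mul_le_of_le_one_right hγ he_p

end RealInequalities

section MoserSequences

theorem le_rpow_pow_of_le_mul_rpow {χ ν D L : ℝ} (hχ : χ.HolderConjugate ν) (hD : 0 < D)
    (hL : 1 ≤ L) {J : ℕ → ℝ} (hJ : ∀ k, 0 ≤ J k)
    (hrec : ∀ k, J (k + 1) ≤ (D * L ^ k * J k) ^ χ) (k : ℕ) :
    J k ≤ (L ^ (ν * (ν - 1)) * D ^ ν * J 0) ^ χ ^ k * D ^ (-ν) := by
  have hL₀ : 0 < L := by linarith
  have hν : 0 < ν - 1 := hχ.symm.sub_one_pos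
  have hχν : χ * ν = χ + ν := hχ.mul_eq_add
  set H := L ^ (ν * (ν - 1)) * D ^ ν * J 0 with hH
  have hH₀ : 0 ≤ H := mul_nonneg (by positivity) (hJ 0)
  -- The decaying factor makes the right-hand side an exact solution of the recursion.
  have hsharp : ∀ k : ℕ, J k ≤ H ^ χ ^ k * D ^ (-ν) * L ^ (-(ν * (ν - 1 + k))) := by
    intro k
    induction k with
    | zero =>
      refine le_of_eq ?_
      rw [hH, pow_zero, Real.rpow_one, Nat.cast_zero, add_zero, Real.rpow_neg hD.le,
        Real.rpow_neg hL₀.le]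
      field_simp
    | succ k ih =>
      calc J (k + 1) ≤ (D * L ^ k * J k) ^ χ := hrec k
        _ ≤ (D * L ^ k * (H ^ χ ^ k * D ^ (-ν) * L ^ (-(ν * (ν - 1 + k))))) ^ χ := by
            have := hJ k
            have := hχ.pos
            gcongr
        _ = (H ^ χ ^ k * D ^ (1 + -ν) * L ^ (k + -(ν * (ν - 1 + k)))) ^ χ := by
            rw [Real.rpow_add hD, Real.rpow_add hL₀, Real.rpow_one, Real.rpow_natCast]
            ring_nf
        _ = H ^ χ ^ (k + 1) * D ^ (-ν) * L ^ (-(ν * (ν - 1 + (k + 1 : ℕ)))) := by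
            rw [Real.mul_rpow (by positivity) (by positivity),
              Real.mul_rpow (by positivity) (by positivity), ← Real.rpow_mul hH₀,
              ← Real.rpow_mul hD.le, ← Real.rpow_mul hL₀.le, ← pow_succ]
            congr 3
            · linear_combination -hχν
            · push_cast
              linear_combination (-(ν + k)) * hχν
  refine (hsharp k).trans (mul_le_of_le_one_right (by positivity) ?_)
  exact Real.rpow_le_one_of_one_le_of_nonpos hL
    (neg_nonpos.2 (mul_nonneg hχ.symm.nonneg (by positivity)))

theorem le_of_forall_setIntegral_rpow_le {X : Type*} [TopologicalSpace X] [MeasurableSpace X]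
    [OpensMeasurableSpace X] {μ : Measure X} [μ.IsOpenPosMeasure] {V : Set X} (hV : IsOpen V)
    {f : X → ℝ} (hf : ContinuousOn f V) (hf₀ : ∀ x ∈ V, 0 ≤ f x) {a : ℕ → ℝ}
    (ha : Tendsto a atTop atTop) (hint : ∀ k, IntegrableOn (fun x => f x ^ a k) V μ) {H m : ℝ}
    (hH : 0 ≤ H) (hbound : ∀ k, ∫ x in V, f x ^ a k ∂μ ≤ H ^ a k * m) {x₀ : X} (hx₀ : x₀ ∈ V) :
    f x₀ ≤ H := by
  by_contra! hlt
  obtain ⟨q, hHq, hqf⟩ := exists_between hlt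
  have hq : 0 < q := hH.trans_lt hHq
  set W := V ∩ f ⁻¹' Ioi q
  have hW_open : IsOpen W := hf.isOpen_inter_preimage hV isOpen_Ioi
  have hnonneg (k) : 0 ≤ᵐ[μ.restrict V] fun x => f x ^ a k :=
    ae_restrict_of_forall_mem hV.measurableSet fun x hx => Real.rpow_nonneg (hf₀ x hx) _
  have hsub {k} (hk : 0 < a k) {x} (hx : x ∈ W) : q ^ a k ≤ f x ^ a k :=
    Real.rpow_le_rpow hq.le (mem_Ioi.1 hx.2).le hk.le
  have hW_finite : μ W ≠ ∞ := by
    obtain ⟨k, hk⟩ := (ha.eventually_gt_atTop 0).exists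
    have := (hint k).measure_ge_lt_top (Real.rpow_pos_of_pos hq (a k))
    rw [Measure.restrict_apply' hV.measurableSet] at this
    exact ((measure_mono fun x hx => show _ ∧ _ from ⟨hsub hk hx, hx.1⟩).trans_lt this).ne
  have hmarkov : ∀ᶠ k in atTop, μ.real W ≤ (H / q) ^ a k * m := by
    filter_upwards [ha.eventually_gt_atTop 0] with k hk
    have : q ^ a k * μ.real W ≤ H ^ a k * m := calc
      q ^ a k * μ.real W ≤ ∫ x in W, f x ^ a k ∂μ :=
        setIntegral_ge_of_const_le_real hW_open.measurableSet hW_finite (fun x hx => hsub hk hx)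
          ((hint k).mono_set inter_subset_left)
      _ ≤ ∫ x in V, f x ^ a k ∂μ :=
        setIntegral_mono_set (hint k) (hnonneg k) inter_subset_left.eventuallyLE
      _ ≤ H ^ a k * m := hbound k
    rwa [Real.div_rpow hH hq.le, div_mul_eq_mul_div, le_div_iff₀' (by positivity)]
  have hlim : Tendsto (fun k => (H / q) ^ a k * m) atTop (nhds (0 * m)) :=
    ((tendsto_rpow_atTop_of_base_lt_one _ (by linarith [div_nonneg hH hq.le])
      ((div_lt_one hq).2 hHq)).comp ha).mul_const m
  have hW_pos : 0 < μ W := hW_open.measure_pos μ (nonempty_of_mem (x := x₀) ⟨hx₀, hqf⟩)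
  have hW_zero : μ.real W ≤ 0 := zero_mul m ▸ ge_of_tendsto hlim hmarkov
  exact hW_zero.not_gt (ENNReal.toReal_pos hW_pos.ne' hW_finite)

end MoserSequences

section MoserIteration

/-- The radii of Moser's iteration, decreasing from `3 / 4 * r` to `r / 2`. -/
def moserRadius (r : ℝ) (k : ℕ) : ℝ := r * (1 / 2 + (1 / 2) ^ k / 4)

theorem moserRadius_zero (r : ℝ) : moserRadius r 0 = 3 / 4 * r := by
  rw [moserRadius, pow_zero]
  ring

theorem moserRadius_sub_moserRadius_succ (r : ℝ) (k : ℕ) :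
    moserRadius r k - moserRadius r (k + 1) = r / (8 * 2 ^ k) := by
  simp only [moserRadius, one_div, inv_pow, pow_succ]
  field_simp
  ring

theorem half_lt_moserRadius {r : ℝ} (hr : 0 < r) (k : ℕ) : r / 2 < moserRadius r k := by
  have : 0 < r * ((1 / 2) ^ k / 4) := by positivity
  rw [moserRadius, mul_add]
  linarith

theorem moserRadius_lt {r : ℝ} (hr : 0 < r) (k : ℕ) : moserRadius r k < r := by
  have : ((1 : ℝ) / 2) ^ k ≤ 1 := pow_le_one₀ (by norm_num) (by norm_num)
  exact mul_lt_of_lt_one_right hr (by linarith)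

variable {X : Type*} [PseudoMetricSpace X] [MeasurableSpace X] {μ : Measure X} {f : X → ℝ} {z : X}
  {r p K χ ν : ℝ}

/-- The reverse Hölder inequality behind Moser's iteration: inside `ball z r`, passing to a smaller
concentric ball raises the exponent of integrability of `f` from `γ` to `γ * χ`, at a cost
inversely proportional to the gap between the radii. -/
def HasReverseHolder (μ : Measure X) (f : X → ℝ) (z : X) (r p K χ : ℝ) : Prop :=
  ∀ ⦃R₁ R₂ γ : ℝ⦄, 0 ≤ R₁ → R₁ < R₂ → R₂ < r → p ≤ γ →
    ∫ x in closedBall z R₁, f x ^ (γ * χ) ∂μ ≤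
      (K * (γ / (R₂ - R₁)) * ∫ x in closedBall z R₂, f x ^ γ ∂μ) ^ χ

namespace HasReverseHolder

theorem setIntegral_rpow_pow_le [OpensMeasurableSpace X] (h : HasReverseHolder μ f z r p K χ)
    (hf : ∀ x ∈ ball z r, 0 ≤ f x) (hχ : χ.HolderConjugate ν) (hp : 0 < p) (hK : 0 < K)
    (hr : 0 < r) (k : ℕ) :
    ∫ x in closedBall z (moserRadius r k), f x ^ (p * χ ^ k) ∂μ ≤
      ((2 * χ) ^ (ν * (ν - 1)) * (8 * K * p / r) ^ ν *
        ∫ x in closedBall z (3 / 4 * r), f x ^ p ∂μ) ^ χ ^ k * (8 * K * p / r) ^ (-ν) := by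
  have hχ₁ : 1 < χ := hχ.lt
  set J : ℕ → ℝ := fun k => ∫ x in closedBall z (moserRadius r k), f x ^ (p * χ ^ k) ∂μ
  have hJ (k) : 0 ≤ J k := setIntegral_nonneg measurableSet_closedBall fun x hx =>
    Real.rpow_nonneg (hf x (closedBall_subset_ball (moserRadius_lt hr k) hx)) _
  have hstep (k) : J (k + 1) ≤ (8 * K * p / r * (2 * χ) ^ k * J k) ^ χ := by
    have hpos : 0 < moserRadius r (k + 1) := (half_pos hr).trans (half_lt_moserRadius hr _)
    have hgap : moserRadius r (k + 1) < moserRadius r k :=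
      sub_pos.1 (moserRadius_sub_moserRadius_succ r k ▸ by positivity)
    have := h hpos.le hgap (moserRadius_lt hr k)
      (le_mul_of_one_le_right hp.le (one_le_pow₀ (n := k) hχ₁.le))
    rw [moserRadius_sub_moserRadius_succ, mul_assoc p, ← pow_succ] at this
    refine this.trans_eq ?_
    congr 2
    field_simp
    ring
  have := le_rpow_pow_of_le_mul_rpow hχ (by positivity) (by linarith) hJ hstep k
  simpa only [moserRadius_zero, pow_zero, mul_one, J] using this

theorem le_mul_rpow_setIntegral [ProperSpace X] [OpensMeasurableSpace X] [μ.IsOpenPosMeasure]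
    [IsFiniteMeasureOnCompacts μ] (h : HasReverseHolder μ f z r p K χ)
    (hf : ContinuousOn f (ball z r)) (hf₀ : ∀ x ∈ ball z r, 0 ≤ f x) (hχ : χ.HolderConjugate ν)
    (hp : 0 < p) (hK : 0 < K) {x₀ : X} (hx₀ : x₀ ∈ ball z (r / 2)) :
    f x₀ ≤ ((2 * χ) ^ (ν * (ν - 1)) * (8 * K * p) ^ ν) ^ (1 / p) *
      (r ^ (-ν) * ∫ x in closedBall z (3 / 4 * r), f x ^ p ∂μ) ^ (1 / p) := by
  have hr : 0 < r := by linarith [pos_of_mem_ball hx₀]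
  have hχ₀ : 0 < χ := hχ.pos
  set I := ∫ x in closedBall z (3 / 4 * r), f x ^ p ∂μ
  have hI : 0 ≤ I := setIntegral_nonneg measurableSet_closedBall fun x hx =>
    Real.rpow_nonneg (hf₀ x (closedBall_subset_ball (by linarith) hx)) _
  set H := (2 * χ) ^ (ν * (ν - 1)) * (8 * K * p / r) ^ ν * I with hH
  have hH₀ : 0 ≤ H := by positivity
  have hH_eq : H ^ (1 / p) = ((2 * χ) ^ (ν * (ν - 1)) * (8 * K * p) ^ ν) ^ (1 / p) *
      (r ^ (-ν) * I) ^ (1 / p) := by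
    rw [← Real.mul_rpow (by positivity) (by positivity), hH, Real.div_rpow (by positivity) hr.le,
      Real.rpow_neg hr.le]
    ring_nf
  have hexp (k : ℕ) : 0 ≤ p * χ ^ k := by positivity
  have hint (k : ℕ) {R : ℝ} (hR : R < r) :
      IntegrableOn (fun x => f x ^ (p * χ ^ k)) (closedBall z R) μ :=
    ((hf.mono (closedBall_subset_ball hR)).rpow_const fun _ _ =>
      Or.inr (hexp k)).integrableOn_compact' (isCompact_closedBall z R) measurableSet_closedBall
  rw [← hH_eq]
  refine le_of_forall_setIntegral_rpow_le isOpen_ball (hf.mono (ball_subset_ball (by linarith)))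
    (fun x hx => hf₀ x (ball_subset_ball (by linarith) hx))
    ((tendsto_pow_atTop_atTop_of_one_lt hχ.lt).const_mul_atTop hp)
    (fun k => (hint k (by linarith)).mono_set ball_subset_closedBall) (by positivity)
    (m := (8 * K * p / r) ^ (-ν)) (fun k => ?_) hx₀
  calc ∫ x in ball z (r / 2), f x ^ (p * χ ^ k) ∂μ
      ≤ ∫ x in closedBall z (moserRadius r k), f x ^ (p * χ ^ k) ∂μ := by
        refine setIntegral_mono_set (hint k (moserRadius_lt hr k))
          (ae_restrict_of_forall_mem measurableSet_closedBall fun x hx =>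
            Real.rpow_nonneg (hf₀ x (closedBall_subset_ball (moserRadius_lt hr k) hx)) _)
          (ball_subset_closedBall.trans (closedBall_subset_closedBall ?_)).eventuallyLE
        exact (half_lt_moserRadius hr k).le
    _ ≤ H ^ χ ^ k * (8 * K * p / r) ^ (-ν) := h.setIntegral_rpow_pow_le hf₀ hχ hp hK hr k
    _ = (H ^ (1 / p)) ^ (p * χ ^ k) * (8 * K * p / r) ^ (-ν) := by
        rw [← Real.rpow_mul hH₀, ← mul_assoc, one_div_mul_cancel hp.ne', one_mul]

end HasReverseHolder

end MoserIteration

section Gradient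

variable {E : Type*} [NormedAddCommGroup E] [InnerProductSpace ℝ E] [CompleteSpace E] {f : E → ℝ}

theorem norm_gradient_eq_norm_fderiv (f : E → ℝ) (x : E) : ‖gradient f x‖ = ‖fderiv ℝ f x‖ :=
  LinearIsometryEquiv.norm_map _ _

theorem measurable_gradient [MeasurableSpace E] [BorelSpace E] [SecondCountableTopology E]
    (f : E → ℝ) : Measurable (gradient f) :=
  (LinearIsometryEquiv.continuous _).measurable.comp (measurable_fderiv ℝ f)

theorem continuous_gradient (hf : ContDiff ℝ 1 f) : Continuous (gradient f) :=
  (LinearIsometryEquiv.continuous _).comp (hf.continuous_fderiv one_ne_zero)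

theorem continuousOn_gradient {U : Set E} (hf : ContDiffOn ℝ 1 f U) (hU : IsOpen U) :
    ContinuousOn (gradient f) U :=
  (LinearIsometryEquiv.continuous _).comp_continuousOn
    (hf.continuousOn_fderiv_of_isOpen hU le_rfl)

theorem support_gradient_subset (f : E → ℝ) : Function.support (gradient f) ⊆ tsupport f := by
  refine fun x hx => support_fderiv_subset ℝ ?_
  rw [Function.mem_support] at hx ⊢
  rwa [← norm_ne_zero_iff, ← norm_gradient_eq_norm_fderiv, norm_ne_zero_iff]

theorem gradient_rpow_mul_rpow {g : E → ℝ} {x : E} {a b : ℝ} (hf : DifferentiableAt ℝ f x)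
    (hg : DifferentiableAt ℝ g x) (ha : 1 ≤ a) (hb : 1 ≤ b) :
    gradient (fun y => f y ^ a * g y ^ b) x =
      (b * f x ^ a * g x ^ (b - 1)) • gradient g x +
        (a * f x ^ (a - 1) * g x ^ b) • gradient f x := by
  have hfderiv : fderiv ℝ (fun y => f y ^ a * g y ^ b) x = _ :=
    ((hf.hasFDerivAt.rpow_const (Or.inr ha)).mul (hg.hasFDerivAt.rpow_const (Or.inr hb))).fderiv
  simp only [gradient, hfderiv, map_add, map_smul, smul_smul]
  congr 2 <;> ring

end Gradient

section Cutoff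

variable {E : Type*} [NormedAddCommGroup E]

theorem exists_norm_deriv_smoothTransition_le :
    ∃ G : ℝ, 1 ≤ G ∧ ∀ x, ‖deriv Real.smoothTransition x‖ ≤ G := by
  have hsupp : HasCompactSupport (deriv Real.smoothTransition) := by
    refine HasCompactSupport.intro (isCompact_Icc (a := (0 : ℝ)) (b := 1)) fun x hx => ?_
    rcases le_or_gt x 0 with hx₀ | hx₀
    · refine IsLocalMin.deriv_eq_zero (.of_forall fun y => ?_)
      rw [Real.smoothTransition.zero_of_nonpos hx₀]
      exact Real.smoothTransition.nonneg y
    · have hx₁ : 1 ≤ x := not_lt.1 fun hx₁ => hx ⟨hx₀.le, hx₁.le⟩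
      refine IsLocalMax.deriv_eq_zero (.of_forall fun y => ?_)
      rw [Real.smoothTransition.one_of_one_le hx₁]
      exact Real.smoothTransition.le_one y
  obtain ⟨G, hG⟩ := hsupp.exists_bound_of_continuous
    (Real.smoothTransition.contDiff.continuous_deriv le_rfl)
  exact ⟨max G 1, le_max_right _ _, fun x => (hG x).trans (le_max_left _ _)⟩

/-- A smooth cutoff which is `1` on `closedBall z R₁` and `0` off `ball z R₂`. It is a function of
`‖x - z‖ ^ 2` so as to be smooth at the centre. -/
def radialCutoff (z : E) (R₁ R₂ : ℝ) (x : E) : ℝ :=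
  Real.smoothTransition ((R₂ ^ 2 - ‖x - z‖ ^ 2) / (R₂ ^ 2 - R₁ ^ 2))

variable {z : E} {R₁ R₂ : ℝ}

theorem radialCutoff_nonneg (x : E) : 0 ≤ radialCutoff z R₁ R₂ x :=
  Real.smoothTransition.nonneg _

theorem radialCutoff_le_one (x : E) : radialCutoff z R₁ R₂ x ≤ 1 :=
  Real.smoothTransition.le_one _

theorem radialCutoff_eq_one (hR₁ : 0 ≤ R₁) (hR : R₁ < R₂) {x : E} (hx : x ∈ closedBall z R₁) :
    radialCutoff z R₁ R₂ x = 1 := by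
  rw [mem_closedBall, dist_eq_norm] at hx
  refine Real.smoothTransition.one_of_one_le ?_
  rw [one_le_div (sub_pos.2 (by gcongr))]
  gcongr

theorem tsupport_radialCutoff_subset (hR₁ : 0 ≤ R₁) (hR : R₁ < R₂) :
    tsupport (radialCutoff z R₁ R₂) ⊆ closedBall z R₂ := by
  refine closure_minimal (fun x hx => ?_) isClosed_closedBall
  by_contra hx'
  rw [mem_closedBall, dist_eq_norm, not_le] at hx'
  have hR₂ : 0 ≤ R₂ := hR₁.trans hR.le
  exact hx (Real.smoothTransition.zero_of_nonpos (div_nonpos_of_nonpos_of_nonneg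
    (sub_nonpos.2 (by gcongr)) (sub_nonneg.2 (by gcongr))))

variable [InnerProductSpace ℝ E]

theorem contDiff_radialCutoff : ContDiff ℝ 1 (radialCutoff z R₁ R₂) :=
  Real.smoothTransition.contDiff.comp
    ((contDiff_const.sub ((contDiff_id.sub contDiff_const).norm_sq ℝ)).div_const _)

theorem exists_norm_gradient_radialCutoff_le [CompleteSpace E] :
    ∃ G : ℝ, 1 ≤ G ∧ ∀ (z : E) {R₁ R₂ : ℝ}, 0 ≤ R₁ → R₁ < R₂ → ∀ x,
      ‖gradient (radialCutoff z R₁ R₂) x‖ ≤ G / (R₂ - R₁) := by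
  obtain ⟨G, hG_one, hG⟩ := exists_norm_deriv_smoothTransition_le
  refine ⟨2 * G, by linarith, fun z R₁ R₂ hR₁ hR x => ?_⟩
  have hR_sub : 0 < R₂ - R₁ := sub_pos.2 hR
  by_cases hx : x ∈ closedBall z R₂
  swap
  · rw [Function.notMem_support.1 fun h =>
      hx (tsupport_radialCutoff_subset hR₁ hR (support_gradient_subset _ h)), norm_zero]
    positivity
  have hfactor : R₂ ^ 2 - R₁ ^ 2 = (R₂ + R₁) * (R₂ - R₁) := sq_sub_sq _ _
  rw [mem_closedBall, dist_eq_norm] at hx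
  have hnorm : HasFDerivAt (fun y : E => ‖y - z‖ ^ 2) (2 • innerSL ℝ (x - z)) x := by
    simpa using ((hasFDerivAt_id x).sub_const z).norm_sq
  have hfderiv : fderiv ℝ (radialCutoff z R₁ R₂) x =
      deriv Real.smoothTransition ((R₂ ^ 2 - ‖x - z‖ ^ 2) / (R₂ ^ 2 - R₁ ^ 2)) •
        (R₂ ^ 2 - R₁ ^ 2)⁻¹ • -(2 • innerSL ℝ (x - z)) :=
    ((Real.smoothTransition.contDiff.differentiable one_ne_zero _).hasDerivAt.comp_hasFDerivAt x
      ((hnorm.const_sub (R₂ ^ 2)).mul_const (R₂ ^ 2 - R₁ ^ 2)⁻¹)).fderiv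
  have hR_sq : 0 < R₂ ^ 2 - R₁ ^ 2 := hfactor ▸ mul_pos (by linarith) hR_sub
  calc ‖gradient (radialCutoff z R₁ R₂) x‖
      = ‖deriv Real.smoothTransition ((R₂ ^ 2 - ‖x - z‖ ^ 2) / (R₂ ^ 2 - R₁ ^ 2))‖ *
          ((R₂ ^ 2 - R₁ ^ 2)⁻¹ * (2 * ‖x - z‖)) := by
        rw [norm_gradient_eq_norm_fderiv, hfderiv, norm_smul, norm_smul, norm_neg, two_nsmul,
          ← two_smul ℝ, norm_smul, innerSL_apply_norm, norm_inv, Real.norm_of_nonneg hR_sq.le,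
          Real.norm_two]
    _ ≤ G * ((R₂ ^ 2 - R₁ ^ 2)⁻¹ * (2 * (R₂ + R₁))) := by
        gcongr
        · exact hG _
        · linarith
    _ = 2 * G / (R₂ - R₁) := by
        have : R₂ + R₁ ≠ 0 := by linarith
        rw [hfactor]
        field_simp

end Cutoff

section Mollification

variable {E : Type*} [NormedAddCommGroup E] [NormedSpace ℝ E]

theorem contDiff_of_contDiffOn_of_tsupport_subset {F : Type*} [NormedAddCommGroup F]
    [NormedSpace ℝ F] {k : WithTop ℕ∞} {f : E → F} {U : Set E} (hf : ContDiffOn ℝ k f U)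
    (hU : IsOpen U) (hsupp : tsupport f ⊆ U) : ContDiff ℝ k f :=
  contDiff_of_contDiffOn_union_of_isOpen hf
    (contDiffOn_const.congr fun _ hx => image_eq_zero_of_notMem_tsupport hx)
    (univ_subset_iff.1 fun _ _ => or_iff_not_imp_right.2 fun hx => hsupp (not_not.1 hx))
    hU (isClosed_tsupport f).isOpen_compl

open scoped Convolution in
theorem exists_contDiff_approx_of_hasCompactSupport [FiniteDimensional ℝ E] {φ : E → ℝ}
    (hφ : ContDiff ℝ 1 φ) (hc : HasCompactSupport φ) (hφ₀ : ∀ x, 0 ≤ φ x) {δ ε : ℝ} (hδ : 0 < δ)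
    (hε : 0 < ε) :
    ∃ ψ : E → ℝ, ContDiff ℝ (⊤ : ℕ∞) ψ ∧ tsupport ψ ⊆ cthickening δ (tsupport φ) ∧
      (∀ x, 0 ≤ ψ x) ∧ (∀ x, ‖ψ x - φ x‖ ≤ ε) ∧ ∀ x, ‖fderiv ℝ ψ x - fderiv ℝ φ x‖ ≤ ε := by
  borelize E
  let μ : Measure E := .addHaar
  obtain ⟨d₀, hd₀, hφ_close⟩ := Metric.uniformContinuous_iff.1
    (hc.uniformContinuous_of_continuous hφ.continuous) ε hε
  have hφ' : Continuous (fderiv ℝ φ) := hφ.continuous_fderiv one_ne_zero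
  obtain ⟨d₁, hd₁, hφ'_close⟩ := Metric.uniformContinuous_iff.1
    ((hc.fderiv ℝ).uniformContinuous_of_continuous hφ') ε hε
  set ρ := min δ (min d₀ d₁)
  have hρ : 0 < ρ := by positivity
  let B : ContDiffBump (0 : E) := ⟨ρ / 2, ρ, half_pos hρ, half_lt_self hρ⟩
  set ψ := B.normed μ ⋆[ContinuousLinearMap.lsmul ℝ ℝ, μ] φ
  have hψ_support : tsupport ψ ⊆ cthickening δ (tsupport φ) := by
    refine closure_minimal ((support_convolution_subset_swap _).trans ?_) isClosed_cthickening
    rintro _ ⟨x, hx, y, hy, rfl⟩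
    rw [B.support_normed_eq, mem_ball_zero_iff] at hy
    refine mem_cthickening_of_dist_le _ x _ _ (subset_closure hx) ?_
    simpa using hy.le.trans (min_le_left _ _)
  have hψ_fderiv (x) : fderiv ℝ ψ x =
      (B.normed μ ⋆[ContinuousLinearMap.lsmul ℝ ℝ, μ] fderiv ℝ φ) x :=
    (hc.hasFDerivAt_convolution_right _ B.continuous_normed.locallyIntegrable hφ x).fderiv
  refine ⟨ψ, B.hasCompactSupport_normed.contDiff_convolution_left _ B.contDiff_normed
    hφ.continuous.locallyIntegrable, hψ_support,
    fun x => integral_nonneg fun y => mul_nonneg (B.nonneg_normed y) (hφ₀ _), fun x => ?_,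
    fun x => ?_⟩
  · rw [← dist_eq_norm]
    refine B.dist_normed_convolution_le hφ.continuous.aestronglyMeasurable fun y hy => ?_
    exact (hφ_close (hy.trans_le ((min_le_right _ _).trans (min_le_left _ _)))).le
  · rw [hψ_fderiv, ← dist_eq_norm]
    refine B.dist_normed_convolution_le hφ'.aestronglyMeasurable fun y hy => ?_
    exact (hφ'_close (hy.trans_le ((min_le_right _ _).trans (min_le_right _ _)))).le

end Mollification

section WeakSubsolution

theorem integrable_inner_of_norm_le {X G : Type*} [MeasurableSpace X] {μ : Measure X}
    [NormedAddCommGroup G] [InnerProductSpace ℝ G] {F h : X → G} {C : ℝ} (hF : Integrable F μ)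
    (hh : AEStronglyMeasurable h μ) (hC : ∀ᵐ x ∂μ, ‖h x‖ ≤ C) :
    Integrable (fun x => ⟪F x, h x⟫) μ := by
  refine (hF.norm.mul_const C).mono' (hF.aestronglyMeasurable.inner hh) ?_
  filter_upwards [hC] with x hx
  exact (norm_inner_le_norm _ _).trans (by gcongr)

theorem integrableOn_inner_of_continuousOn {X G : Type*} [TopologicalSpace X] [T2Space X]
    [MeasurableSpace X] [OpensMeasurableSpace X] {μ : Measure X} [NormedAddCommGroup G]
    [InnerProductSpace ℝ G] {F h : X → G} {K : Set X} (hK : IsCompact K) (hF : IntegrableOn F K μ)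
    (hh : ContinuousOn h K) : IntegrableOn (fun x => ⟪F x, h x⟫) K μ := by
  obtain ⟨C, hC⟩ := hK.exists_bound_of_continuousOn hh
  exact integrable_inner_of_norm_le hF
    (hh.aestronglyMeasurable_of_isCompact hK hK.measurableSet)
    (ae_restrict_of_forall_mem hK.measurableSet hC)

theorem setIntegral_inner_le_add_of_norm_sub_le {X G : Type*} [TopologicalSpace X] [T2Space X]
    [MeasurableSpace X] [OpensMeasurableSpace X] {μ : Measure X} [NormedAddCommGroup G]
    [InnerProductSpace ℝ G] {F h₁ h₂ : X → G} {K : Set X} {ε : ℝ} (hK : IsCompact K)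
    (hF : IntegrableOn F K μ) (hh₁ : ContinuousOn h₁ K) (hh₂ : ContinuousOn h₂ K)
    (hε : ∀ x ∈ K, ‖h₁ x - h₂ x‖ ≤ ε) :
    ∫ x in K, ⟪F x, h₁ x⟫ ∂μ ≤ ∫ x in K, ⟪F x, h₂ x⟫ ∂μ + ε * ∫ x in K, ‖F x‖ ∂μ := by
  have hint₁ := integrableOn_inner_of_continuousOn hK hF hh₁
  have hint₂ := integrableOn_inner_of_continuousOn hK hF hh₂
  rw [← integral_const_mul, ← integral_add hint₂ (hF.norm.const_mul ε)]
  refine setIntegral_mono_on hint₁ (hint₂.add (hF.norm.const_mul ε)) hK.measurableSet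
    fun x hx => ?_
  have hdiff : ⟪F x, h₁ x - h₂ x⟫ ≤ ‖F x‖ * ε :=
    (real_inner_le_norm _ _).trans (by gcongr; exact hε x hx)
  rw [inner_sub_right] at hdiff
  linarith

theorem setIntegral_mul_eq_of_tsupport_subset {X : Type*} [TopologicalSpace X] [MeasurableSpace X]
    {μ : Measure X} {g φ : X → ℝ} {K U : Set X} (hU : MeasurableSet U) (hKU : K ⊆ U)
    (hφ : tsupport φ ⊆ K) : ∫ x in U, g x * φ x ∂μ = ∫ x in K, g x * φ x ∂μ := by
  refine setIntegral_eq_of_subset_of_forall_sdiff_eq_zero hU hKU fun x hx => ?_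
  rw [image_eq_zero_of_notMem_tsupport fun h => hx.2 (hφ h), mul_zero]

variable {E : Type*} [NormedAddCommGroup E] [InnerProductSpace ℝ E] [MeasurableSpace E]

/-- `F` and `g` satisfy `div F + g ≥ 0` on `U` in the sense of distributions. -/
def IsWeakSubsol [CompleteSpace E] (μ : Measure E) (F : E → E) (g : E → ℝ) (U : Set E) : Prop :=
  ∀ φ : E → ℝ, ContDiff ℝ (⊤ : ℕ∞) φ → HasCompactSupport φ → tsupport φ ⊆ U → (∀ x, 0 ≤ φ x) →
    ∫ x in U, ⟪F x, gradient φ x⟫ ∂μ ≤ ∫ x in U, g x * φ x ∂μ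

variable {μ : Measure E} {F : E → E} {g : E → ℝ} {U : Set E}

theorem setIntegral_inner_gradient_eq_of_tsupport_subset [CompleteSpace E]
    {K : Set E} {φ : E → ℝ} (hU : MeasurableSet U) (hKU : K ⊆ U) (hφ : tsupport φ ⊆ K) :
    ∫ x in U, ⟪F x, gradient φ x⟫ ∂μ = ∫ x in K, ⟪F x, gradient φ x⟫ ∂μ := by
  refine setIntegral_eq_of_subset_of_forall_sdiff_eq_zero hU hKU fun x hx => ?_
  have : gradient φ x = 0 :=
    Function.notMem_support.1 fun h => hx.2 (hφ (support_gradient_subset φ h))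
  rw [this, inner_zero_right]

variable [BorelSpace E] [FiniteDimensional ℝ E]

theorem IsWeakSubsol.setIntegral_inner_gradient_le (h : IsWeakSubsol μ F g U) (hU : IsOpen U)
    (hF : LocallyIntegrableOn F U μ) (hg : LocallyIntegrableOn g U μ) {φ : E → ℝ}
    (hφ : ContDiff ℝ 1 φ) (hc : HasCompactSupport φ) (hφU : tsupport φ ⊆ U)
    (hφ₀ : ∀ x, 0 ≤ φ x) :
    ∫ x in U, ⟪F x, gradient φ x⟫ ∂μ ≤ ∫ x in U, g x * φ x ∂μ := by
  obtain ⟨δ, hδ, hKU⟩ := hc.isCompact.exists_cthickening_subset_open hU hφU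
  set K := cthickening δ (tsupport φ)
  have hK : IsCompact K := hc.isCompact.cthickening
  have hFK := hF.integrableOn_compact_subset hKU hK
  have hgK := hg.integrableOn_compact_subset hKU hK
  set M := ∫ x in K, ‖F x‖ ∂μ + ∫ x in K, ‖g x‖ ∂μ with hM
  have happrox : ∀ ε > 0,
      ∫ x in U, ⟪F x, gradient φ x⟫ ∂μ ≤ ∫ x in U, g x * φ x ∂μ + ε * M := by
    intro ε hε
    obtain ⟨ψ, hψ, hψK, hψ₀, hψφ, hψφ'⟩ :=
      exists_contDiff_approx_of_hasCompactSupport hφ hc hφ₀ hδ hε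
    have hψ₁ : ContDiff ℝ 1 ψ := hψ.of_le (by exact_mod_cast le_top)
    have hweak := h ψ hψ (hK.of_isClosed_subset (isClosed_tsupport ψ) hψK) (hψK.trans hKU) hψ₀
    have hflux := setIntegral_inner_le_add_of_norm_sub_le hK hFK
      (continuous_gradient hφ).continuousOn (continuous_gradient hψ₁).continuousOn (ε := ε)
      fun x _ => by
        simpa only [gradient, ← map_sub, LinearIsometryEquiv.norm_map, norm_sub_rev]
          using hψφ' x
    have hsource := setIntegral_inner_le_add_of_norm_sub_le hK hgK hψ.continuous.continuousOn
      hφ.continuous.continuousOn fun x _ => hψφ x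
    simp only [RCLike.inner_apply', conj_trivial] at hsource
    rw [setIntegral_inner_gradient_eq_of_tsupport_subset hU.measurableSet hKU hψK,
      setIntegral_mul_eq_of_tsupport_subset hU.measurableSet hKU hψK] at hweak
    have hφK : tsupport φ ⊆ K := self_subset_cthickening _
    rw [setIntegral_inner_gradient_eq_of_tsupport_subset hU.measurableSet hKU hφK,
      setIntegral_mul_eq_of_tsupport_subset hU.measurableSet hKU hφK, hM]
    linarith
  have hlim : Tendsto (fun ε => ∫ x in U, g x * φ x ∂μ + ε * M) (nhdsWithin 0 (Ioi 0))
      (nhds (∫ x in U, g x * φ x ∂μ + 0 * M)) :=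
    tendsto_nhdsWithin_of_tendsto_nhds (Continuous.tendsto (by fun_prop) 0)
  rw [zero_mul, add_zero] at hlim
  exact ge_of_tendsto hlim (eventually_mem_nhdsWithin.mono happrox)

end WeakSubsolution

section Sobolev

theorem exists_integral_norm_rpow_le_rpow_integral_norm_fderiv {E F : Type*} [NormedAddCommGroup E]
    [NormedSpace ℝ E] [FiniteDimensional ℝ E] [MeasurableSpace E] [BorelSpace E]
    [NormedAddCommGroup F] [NormedSpace ℝ F] (μ : Measure E) [μ.IsAddHaarMeasure] {χ : ℝ}
    (hχ : (Module.finrank ℝ E : ℝ).HolderConjugate χ) :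
    ∃ S : ℝ, 0 < S ∧ ∀ u : E → F, ContDiff ℝ 1 u → HasCompactSupport u →
      ∫ x, ‖u x‖ ^ χ ∂μ ≤ (S * ∫ x, ‖fderiv ℝ u x‖ ∂μ) ^ χ := by
  lift χ to NNReal using hχ.symm.nonneg
  have hχ₀ : (0 : ℝ) < χ := hχ.symm.pos
  refine ⟨eLpNormLESNormFDerivOneConst μ χ + 1, by positivity, fun u hu hc => ?_⟩
  have hu_memLp : MemLp u χ μ := hu.continuous.memLp_of_hasCompactSupport hc
  have hu'_integrable : Integrable (fderiv ℝ u) μ :=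
    (hu.continuous_fderiv one_ne_zero).integrable_of_hasCompactSupport (hc.fderiv ℝ)
  have hsobolev := eLpNorm_le_eLpNorm_fderiv_one μ hu hc (p := χ) (mod_cast hχ)
  rw [hu_memLp.eLpNorm_eq_integral_rpow_norm (mod_cast hχ₀.ne') ENNReal.coe_ne_top,
    eLpNorm_one_eq_lintegral_enorm, ← ofReal_integral_norm_eq_lintegral_enorm hu'_integrable,
    ← ENNReal.ofReal_coe_nnreal (p := eLpNormLESNormFDerivOneConst μ χ),
    ← ENNReal.ofReal_mul NNReal.zero_le_coe,
    ENNReal.ofReal_le_ofReal_iff (by positivity), ENNReal.coe_toReal,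
    Real.rpow_inv_le_iff_of_pos (by positivity) (by positivity) hχ₀] at hsobolev
  refine hsobolev.trans ?_
  gcongr
  exact le_add_of_nonneg_right zero_le_one

end Sobolev

section EnergyEstimates

theorem tsupport_rpow_mul_subset {X : Type*} [TopologicalSpace X] {f g : X → ℝ} {a : ℝ}
    (ha : a ≠ 0) : tsupport (fun x => f x ^ a * g x) ⊆ tsupport f := by
  refine closure_mono fun x hx hfx => hx ?_
  simp only [hfx, Real.zero_rpow ha, zero_mul]

theorem contDiff_rpow_mul_rpow {E : Type*} [NormedAddCommGroup E] [NormedSpace ℝ E]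
    {η v : E → ℝ} {U : Set E} {a b : ℝ} (hU : IsOpen U) (hη : ContDiff ℝ 1 η)
    (hηU : tsupport η ⊆ U) (hv : ContDiffOn ℝ 1 v U) (ha : 1 ≤ a) (hb : 1 ≤ b) :
    ContDiff ℝ 1 fun x => η x ^ a * v x ^ b := by
  refine contDiff_of_contDiffOn_of_tsupport_subset ?_ hU
    ((tsupport_rpow_mul_subset (by linarith)).trans hηU)
  exact (hη.contDiffOn.rpow_const_of_le (by exact_mod_cast ha)).mul
    (hv.rpow_const_of_le (by exact_mod_cast hb))

variable {E : Type*} [NormedAddCommGroup E] [InnerProductSpace ℝ E] [FiniteDimensional ℝ E]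
  [MeasurableSpace E]

/-- `v` is a nonnegative `C¹` solution of `div F + g ≥ 0` on `U`, where the flux `F` is `p`-coercive
and of growth `p - 1` in `Dv`, and the source `g` is, after multiplication by `v`, absorbed by the
coercivity up to a term of size `s * v`. In a ball of radius `r` one takes `s = r⁻¹`: by Young's
inequality this is what the smallness assumption on `b` says of `g = b * |Dv| ^ α`. -/
structure IsControlledSubsol (μ : Measure E) (p C₁ C₂ s : ℝ) (F : E → E) (g : E → ℝ) (U : Set E)
    (v : E → ℝ) : Prop where
  isOpen : IsOpen U
  contDiffOn : ContDiffOn ℝ 1 v U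
  nonneg : ∀ x ∈ U, 0 ≤ v x
  aestronglyMeasurable_flux : AEStronglyMeasurable F (μ.restrict U)
  coercive : ∀ x ∈ U, C₁ * ‖gradient v x‖ ^ p ≤ ⟪gradient v x, F x⟫
  growth : ∀ x ∈ U, ‖F x‖ ≤ C₂ * ‖gradient v x‖ ^ (p - 1)
  locallyIntegrableOn_source : LocallyIntegrableOn g U μ
  source_le : ∀ᵐ x ∂μ.restrict U, g x * v x ≤
    C₁ / 2 * (‖gradient v x‖ ^ p + ‖gradient v x‖ ^ (p - 1) * (s * v x))
  weak : IsWeakSubsol μ F g U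

/-- A `C¹` cutoff supported in `U` whose gradient is at most `T`. -/
structure IsCutoff (η : E → ℝ) (U : Set E) (T : ℝ) : Prop where
  contDiff : ContDiff ℝ 1 η
  hasCompactSupport : HasCompactSupport η
  tsupport_subset : tsupport η ⊆ U
  nonneg : ∀ x, 0 ≤ η x
  le_one : ∀ x, η x ≤ 1
  norm_gradient_le : ∀ x, ‖gradient η x‖ ≤ T

namespace IsControlledSubsol

variable {μ : Measure E} {p C₁ C₂ s T δ : ℝ} {F : E → E} {g v η : E → ℝ} {U : Set E}

theorem continuousOn_rpow (h : IsControlledSubsol μ p C₁ C₂ s F g U v) {a : ℝ} (ha : 0 ≤ a) :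
    ContinuousOn (fun x => v x ^ a) U :=
  h.contDiffOn.continuousOn.rpow_const fun _ _ => Or.inr ha

theorem continuousOn_norm_gradient_rpow (h : IsControlledSubsol μ p C₁ C₂ s F g U v) {a : ℝ}
    (ha : 0 ≤ a) : ContinuousOn (fun x => ‖gradient v x‖ ^ a) U :=
  (continuousOn_gradient h.contDiffOn h.isOpen).norm.rpow_const fun _ _ => Or.inr ha

theorem locallyIntegrableOn_flux [BorelSpace E] [IsLocallyFiniteMeasure μ]
    (h : IsControlledSubsol μ p C₁ C₂ s F g U v) (hp : 1 ≤ p) : LocallyIntegrableOn F U μ := by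
  refine (locallyIntegrableOn_iff h.isOpen.isLocallyClosed).2 fun K hKU hK => ?_
  have hbound : IntegrableOn (fun x => C₂ * ‖gradient v x‖ ^ (p - 1)) K μ :=
    (continuousOn_const.mul ((h.continuousOn_norm_gradient_rpow
      (sub_nonneg.2 hp)).mono hKU)).integrableOn_compact hK
  exact hbound.mono' (h.aestronglyMeasurable_flux.mono_set hKU)
    (ae_restrict_of_forall_mem hK.measurableSet fun x hx => h.growth x (hKU hx))

/-- The left-hand side is the integrand of the weak inequality tested with `η ^ p * v ^ (δ + 1)`. -/
theorem test_integrand_le (h : IsControlledSubsol μ p C₁ C₂ s F g U v) (hη : IsCutoff η U T)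
    (hp : 1 ≤ p) (hC₁ : 0 < C₁) (hC₂ : 0 ≤ C₂) (hsT : s ≤ T) (hδ : 0 ≤ δ) {x : E} (hx : x ∈ U)
    (hsource : g x * v x ≤
      C₁ / 2 * (‖gradient v x‖ ^ p + ‖gradient v x‖ ^ (p - 1) * (s * v x))) :
    g x * (η x ^ p * v x ^ (δ + 1)) - ⟪F x, gradient (fun y => η y ^ p * v y ^ (δ + 1)) x⟫ ≤
      C₁ / 4 * (v x ^ δ * (caccioppoliConst p C₁ C₂ * T * v x) ^ p -
        v x ^ δ * (η x * ‖gradient v x‖) ^ p) := by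
  have hv := h.nonneg x hx
  have hT : 0 ≤ T := (norm_nonneg _).trans (hη.norm_gradient_le x)
  have hF_gradient_v : C₁ * ‖gradient v x‖ ^ p ≤ ⟪F x, gradient v x⟫ :=
    real_inner_comm (gradient v x) (F x) ▸ h.coercive x hx
  have hF_gradient_η : -(C₂ * ‖gradient v x‖ ^ (p - 1) * T) ≤ ⟪F x, gradient η x⟫ := by
    refine neg_le_of_abs_le ((abs_real_inner_le_norm _ _).trans ?_)
    exact mul_le_mul (h.growth x hx) (hη.norm_gradient_le x) (norm_nonneg _) (by positivity)
  have hpointwise := mul_le_mul_of_nonneg_left (caccioppoli_integrand_le hp hC₁ hC₂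
    (le_add_of_nonneg_left hδ) (hη.nonneg x) (hη.le_one x) (norm_nonneg _) hv hT hsT hsource
    hF_gradient_v hF_gradient_η) (Real.rpow_nonneg hv δ)
  rw [gradient_rpow_mul_rpow (hη.contDiff.differentiable one_ne_zero x)
      ((h.contDiffOn.differentiableOn one_ne_zero).differentiableAt (h.isOpen.mem_nhds hx)) hp
      (le_add_of_nonneg_left hδ), inner_add_right, inner_smul_right, inner_smul_right,
    add_sub_cancel_right, Real.rpow_add_one' hv (by positivity)]
  linarith

theorem norm_gradient_rpow_mul_rpow_le (h : IsControlledSubsol μ p C₁ C₂ s F g U v)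
    (hη : IsCutoff η U T) (hp : 1 ≤ p) (hT : 0 < T) (hδ : 0 ≤ δ) {x : E} (hx : x ∈ U) :
    ‖gradient (fun y => η y ^ p * v y ^ (δ + p)) x‖ ≤
      T ^ (1 - p) * ((δ + p + p) * (v x ^ δ * (T * v x) ^ p) +
        (δ + p) * (v x ^ δ * (η x * ‖gradient v x‖) ^ p)) := by
  have hv := h.nonneg x hx
  have hη₀ := hη.nonneg x
  calc ‖gradient (fun y => η y ^ p * v y ^ (δ + p)) x‖
      ≤ (δ + p) * η x ^ p * v x ^ (δ + p - 1) * ‖gradient v x‖ +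
          p * η x ^ (p - 1) * v x ^ (δ + p) * ‖gradient η x‖ := by
        rw [gradient_rpow_mul_rpow (hη.contDiff.differentiable one_ne_zero x)
          ((h.contDiffOn.differentiableOn one_ne_zero).differentiableAt (h.isOpen.mem_nhds hx))
          hp (by linarith)]
        refine (norm_add_le _ _).trans_eq ?_
        rw [norm_smul_of_nonneg (by positivity), norm_smul_of_nonneg (by positivity)]
    _ ≤ (δ + p) * η x ^ p * v x ^ (δ + p - 1) * ‖gradient v x‖ +
          p * η x ^ (p - 1) * v x ^ (δ + p) * T := by
        gcongr
        exact hη.norm_gradient_le x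
    _ = v x ^ δ * ((δ + p) * η x ^ p * v x ^ (p - 1) * ‖gradient v x‖ +
          p * η x ^ (p - 1) * v x ^ p * T) := by
        rw [add_sub_assoc, Real.rpow_add_of_nonneg hv hδ (sub_nonneg.2 hp),
          Real.rpow_add_of_nonneg hv hδ (by linarith)]
        ring
    _ ≤ v x ^ δ * (T ^ (1 - p) * ((δ + p + p) * (T * v x) ^ p +
          (δ + p) * (η x * ‖gradient v x‖) ^ p)) := by
        gcongr
        exact sobolev_integrand_le hp (by positivity) hη₀ (hη.le_one x) (norm_nonneg _) hv hT
    _ = _ := by ring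

theorem setIntegral_rpow_mul_const_mul_rpow (h : IsControlledSubsol μ p C₁ C₂ s F g U v) {K : Set E}
    (hK : MeasurableSet K) (hKU : K ⊆ U) {c q : ℝ} (hc : 0 ≤ c) (hδ : 0 ≤ δ) (hq : 0 ≤ q) :
    ∫ x in K, v x ^ δ * (c * v x) ^ q ∂μ = c ^ q * ∫ x in K, v x ^ (δ + q) ∂μ := by
  rw [← integral_const_mul]
  refine setIntegral_congr_fun hK fun x hx => ?_
  have hv := h.nonneg x (hKU hx)
  simp only [Real.mul_rpow hc hv, Real.rpow_add_of_nonneg hv hδ hq]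
  ring

variable [BorelSpace E] [IsLocallyFiniteMeasure μ]

theorem integrableOn_tsupport (hη : IsCutoff η U T) {f : E → ℝ} (hf : ContinuousOn f U) :
    IntegrableOn f (tsupport η) μ :=
  (hf.mono hη.tsupport_subset).integrableOn_compact hη.hasCompactSupport

theorem integrableOn_rpow_mul_rpow (h : IsControlledSubsol μ p C₁ C₂ s F g U v)
    (hη : IsCutoff η U T) {c q : ℝ} (hδ : 0 ≤ δ) (hq : 0 ≤ q) :
    IntegrableOn (fun x => v x ^ δ * (c * v x) ^ q) (tsupport η) μ :=
  integrableOn_tsupport hη <| (h.continuousOn_rpow hδ).mul <|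
    (continuousOn_const.mul h.contDiffOn.continuousOn).rpow_const fun _ _ => Or.inr hq

theorem integrableOn_rpow_mul_gradient_rpow (h : IsControlledSubsol μ p C₁ C₂ s F g U v)
    (hη : IsCutoff η U T) {q : ℝ} (hδ : 0 ≤ δ) (hq : 0 ≤ q) :
    IntegrableOn (fun x => v x ^ δ * (η x * ‖gradient v x‖) ^ q) (tsupport η) μ :=
  integrableOn_tsupport hη <| (h.continuousOn_rpow hδ).mul <|
    (hη.contDiff.continuous.continuousOn.mul
      (continuousOn_gradient h.contDiffOn h.isOpen).norm).rpow_const fun _ _ => Or.inr hq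

/-- The **Caccioppoli inequality**, obtained by testing with `η ^ p * v ^ (δ + 1)`. -/
theorem setIntegral_rpow_mul_gradient_le (h : IsControlledSubsol μ p C₁ C₂ s F g U v)
    (hη : IsCutoff η U T) (hp : 1 ≤ p) (hC₁ : 0 < C₁) (hC₂ : 0 ≤ C₂) (hsT : s ≤ T) (hδ : 0 ≤ δ) :
    ∫ x in tsupport η, v x ^ δ * (η x * ‖gradient v x‖) ^ p ∂μ ≤
      ∫ x in tsupport η, v x ^ δ * (caccioppoliConst p C₁ C₂ * T * v x) ^ p ∂μ := by
  set φ : E → ℝ := fun x => η x ^ p * v x ^ (δ + 1)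
  set A : E → ℝ := fun x => v x ^ δ * (caccioppoliConst p C₁ C₂ * T * v x) ^ p
  set B : E → ℝ := fun x => v x ^ δ * (η x * ‖gradient v x‖) ^ p
  have hK := hη.hasCompactSupport
  have hKU := hη.tsupport_subset
  have hφ : ContDiff ℝ 1 φ := contDiff_rpow_mul_rpow h.isOpen hη.contDiff hKU h.contDiffOn hp
    (le_add_of_nonneg_left hδ)
  have hφK : tsupport φ ⊆ tsupport η := tsupport_rpow_mul_subset (by linarith)
  have hφ₀ (x) : 0 ≤ φ x := by
    by_cases hx : x ∈ U
    · exact mul_nonneg (Real.rpow_nonneg (hη.nonneg x) _) (Real.rpow_nonneg (h.nonneg x hx) _)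
    · exact (image_eq_zero_of_notMem_tsupport fun hx' => hx (hKU (hφK hx'))).ge
  have hF := h.locallyIntegrableOn_flux hp
  have hweak := h.weak.setIntegral_inner_gradient_le h.isOpen hF h.locallyIntegrableOn_source hφ
    (hK.of_isClosed_subset (isClosed_tsupport φ) hφK) (hφK.trans hKU) hφ₀
  rw [setIntegral_inner_gradient_eq_of_tsupport_subset h.isOpen.measurableSet hKU hφK,
    setIntegral_mul_eq_of_tsupport_subset h.isOpen.measurableSet hKU hφK] at hweak
  have hflux_int := integrableOn_inner_of_continuousOn hK
    (hF.integrableOn_compact_subset hKU hK) (continuous_gradient hφ).continuousOn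
  have hsource_int := (h.locallyIntegrableOn_source.integrableOn_compact_subset hKU
    hK).mul_continuousOn hφ.continuous.continuousOn hK
  have hA : IntegrableOn A (tsupport η) μ :=
    h.integrableOn_rpow_mul_rpow hη hδ (by linarith)
  have hB : IntegrableOn B (tsupport η) μ :=
    h.integrableOn_rpow_mul_gradient_rpow hη hδ (by linarith)
  have htest : ∫ x in tsupport η, (g x * φ x - ⟪F x, gradient φ x⟫) ∂μ ≤
      ∫ x in tsupport η, C₁ / 4 * (A x - B x) ∂μ := by
    refine setIntegral_mono_ae_restrict (hsource_int.sub hflux_int) ((hA.sub hB).const_mul _) ?_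
    filter_upwards [ae_restrict_of_ae_restrict_of_subset hKU h.source_le,
      ae_restrict_mem hK.measurableSet] with x hx hxK
    exact h.test_integrand_le hη hp hC₁ hC₂ hsT hδ (hKU hxK) hx
  rw [integral_sub hsource_int hflux_int, integral_const_mul, integral_sub hA hB] at htest
  have : 0 ≤ C₁ / 4 * (∫ x in tsupport η, A x ∂μ - ∫ x in tsupport η, B x ∂μ) := by linarith
  exact sub_nonneg.1 ((mul_nonneg_iff_of_pos_left (by positivity)).1 this)

theorem integral_norm_gradient_rpow_mul_rpow_le (h : IsControlledSubsol μ p C₁ C₂ s F g U v)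
    (hη : IsCutoff η U T) (hp : 1 ≤ p) (hC₁ : 0 < C₁) (hC₂ : 0 ≤ C₂) (hT : 0 < T) (hsT : s ≤ T)
    (hδ : 0 ≤ δ) :
    ∫ x, ‖gradient (fun y => η y ^ p * v y ^ (δ + p)) x‖ ∂μ ≤
      (δ + p) * T * (2 + caccioppoliConst p C₁ C₂ ^ p) * ∫ x in tsupport η, v x ^ (δ + p) ∂μ := by
  set Λ := caccioppoliConst p C₁ C₂
  have hΛ : 0 ≤ Λ := caccioppoliConst_nonneg (by linarith) hC₁.le hC₂
  have hp₀ : 0 < p := by linarith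
  have hK := hη.hasCompactSupport.measurableSet
  have hKU := hη.tsupport_subset
  set I := ∫ x in tsupport η, v x ^ (δ + p) ∂μ
  have hI : 0 ≤ I := setIntegral_nonneg hK fun x hx => Real.rpow_nonneg (h.nonneg x (hKU hx)) _
  have hweight {c : ℝ} (hc : 0 ≤ c) :
      ∫ x in tsupport η, v x ^ δ * (c * v x) ^ p ∂μ = c ^ p * I :=
    h.setIntegral_rpow_mul_const_mul_rpow hK hKU hc hδ hp₀.le
  have hsupp (x) (hx : x ∉ tsupport η) :
      ‖gradient (fun y => η y ^ p * v y ^ (δ + p)) x‖ = 0 :=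
    norm_eq_zero.2 <| Function.notMem_support.1 fun hx' =>
      hx (tsupport_rpow_mul_subset hp₀.ne' (support_gradient_subset _ hx'))
  have hA := h.integrableOn_rpow_mul_rpow (μ := μ) (c := T) hη hδ hp₀.le
  have hB := h.integrableOn_rpow_mul_gradient_rpow (μ := μ) hη hδ hp₀.le
  calc ∫ x, ‖gradient (fun y => η y ^ p * v y ^ (δ + p)) x‖ ∂μ
      = ∫ x in tsupport η, ‖gradient (fun y => η y ^ p * v y ^ (δ + p)) x‖ ∂μ :=
        (setIntegral_eq_integral_of_forall_compl_eq_zero hsupp).symm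
    _ ≤ ∫ x in tsupport η, T ^ (1 - p) * ((δ + p + p) * (v x ^ δ * (T * v x) ^ p) +
          (δ + p) * (v x ^ δ * (η x * ‖gradient v x‖) ^ p)) ∂μ :=
        integral_mono_of_nonneg (.of_forall fun _ => norm_nonneg _)
          (((hA.const_mul _).add (hB.const_mul _)).const_mul _)
          (ae_restrict_of_forall_mem hK fun x hx =>
            h.norm_gradient_rpow_mul_rpow_le hη hp hT hδ (hKU hx))
    _ = T ^ (1 - p) * ((δ + p + p) * (T ^ p * I) +
          (δ + p) * ∫ x in tsupport η, v x ^ δ * (η x * ‖gradient v x‖) ^ p ∂μ) := by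
        rw [integral_const_mul, integral_add (hA.const_mul _) (hB.const_mul _),
          integral_const_mul, integral_const_mul, hweight hT.le]
    _ ≤ T ^ (1 - p) * ((δ + p + p) * (T ^ p * I) + (δ + p) * ((Λ * T) ^ p * I)) := by
        gcongr
        rw [← hweight (by positivity)]
        exact h.setIntegral_rpow_mul_gradient_le hη hp hC₁ hC₂ hsT hδ
    _ = (T ^ (1 - p) * T ^ p) * ((δ + p + p + (δ + p) * Λ ^ p) * I) := by
        rw [Real.mul_rpow hΛ hT.le]
        ring
    _ ≤ T * ((δ + p + (δ + p) + (δ + p) * Λ ^ p) * I) := by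
        rw [← Real.rpow_add hT, sub_add_cancel, Real.rpow_one]
        gcongr
        exact le_add_of_nonneg_left hδ
    _ = (δ + p) * T * (2 + Λ ^ p) * I := by ring

end IsControlledSubsol

end EnergyEstimates

section LocalBoundedness

variable {E : Type*} [NormedAddCommGroup E] [InnerProductSpace ℝ E] [FiniteDimensional ℝ E]
  [MeasurableSpace E] [BorelSpace E]

theorem exists_setIntegral_rpow_le_of_isCutoff (μ : Measure E) [μ.IsAddHaarMeasure]
    {p C₁ C₂ χ : ℝ} (hp : 1 ≤ p) (hC₁ : 0 < C₁) (hC₂ : 0 ≤ C₂)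
    (hχ : (Module.finrank ℝ E : ℝ).HolderConjugate χ) :
    ∃ K : ℝ, 0 < K ∧ ∀ {F : E → E} {g v η : E → ℝ} {U V : Set E} {s T γ : ℝ},
      IsControlledSubsol μ p C₁ C₂ s F g U v → IsCutoff η U T → MeasurableSet V →
      (∀ x ∈ V, x ∈ U ∧ η x = 1) → 0 < T → s ≤ T → p ≤ γ →
        ∫ x in V, v x ^ (γ * χ) ∂μ ≤ (K * (γ * T) * ∫ x in tsupport η, v x ^ γ ∂μ) ^ χ := by
  obtain ⟨S, hS, hsobolev⟩ :=
    exists_integral_norm_rpow_le_rpow_integral_norm_fderiv (F := ℝ) μ hχ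
  have hΛ := caccioppoliConst_nonneg (by linarith : 0 ≤ p) hC₁.le hC₂
  refine ⟨S * (2 + caccioppoliConst p C₁ C₂ ^ p), by positivity, ?_⟩
  intro F g v η U V s T γ h hη hV hVη hT hsT hγ
  have hχ₀ : 0 ≤ χ := hχ.symm.nonneg
  have hp₀ : p ≠ 0 := by linarith
  set u : E → ℝ := fun x => η x ^ p * v x ^ γ
  have hu : ContDiff ℝ 1 u := contDiff_rpow_mul_rpow h.isOpen hη.contDiff hη.tsupport_subset
    h.contDiffOn hp (hp.trans hγ)
  have hu_supp : HasCompactSupport u := hη.hasCompactSupport.of_isClosed_subset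
    (isClosed_tsupport u) (tsupport_rpow_mul_subset hp₀)
  have hu_grad := h.integral_norm_gradient_rpow_mul_rpow_le hη hp hC₁ hC₂ hT hsT
    (sub_nonneg.2 hγ)
  rw [sub_add_cancel] at hu_grad
  have hu_int : Integrable (fun x => ‖u x‖ ^ χ) μ :=
    (hu.continuous.norm.rpow_const fun _ => Or.inr hχ₀).integrable_of_hasCompactSupport
      (hu_supp.norm.comp_left (g := (· ^ χ)) (Real.zero_rpow hχ.symm.ne_zero))
  calc ∫ x in V, v x ^ (γ * χ) ∂μ = ∫ x in V, ‖u x‖ ^ χ ∂μ := by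
        refine setIntegral_congr_fun hV fun x hx => ?_
        have hv := h.nonneg x (hVη x hx).1
        simp only [u, (hVη x hx).2, Real.one_rpow, one_mul, Real.rpow_mul hv,
          Real.norm_of_nonneg (Real.rpow_nonneg hv γ)]
    _ ≤ ∫ x, ‖u x‖ ^ χ ∂μ :=
        setIntegral_le_integral hu_int (.of_forall fun _ => by positivity)
    _ ≤ (S * ∫ x, ‖fderiv ℝ u x‖ ∂μ) ^ χ := hsobolev u hu hu_supp
    _ ≤ _ := by
        simp only [← norm_gradient_eq_norm_fderiv]
        gcongr ?_ ^ χ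
        exact (mul_le_mul_of_nonneg_left hu_grad hS.le).trans_eq (by ring)

theorem exists_hasReverseHolder (μ : Measure E) [μ.IsAddHaarMeasure]
    {p C₁ C₂ χ : ℝ} (hp : 1 ≤ p) (hC₁ : 0 < C₁) (hC₂ : 0 ≤ C₂)
    (hχ : (Module.finrank ℝ E : ℝ).HolderConjugate χ) :
    ∃ K : ℝ, 0 < K ∧ ∀ {F : E → E} {g v : E → ℝ} {z : E} {r : ℝ},
      IsControlledSubsol μ p C₁ C₂ r⁻¹ F g (ball z r) v →
        HasReverseHolder μ v z r p K χ := by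
  obtain ⟨K, hK, hstep⟩ := exists_setIntegral_rpow_le_of_isCutoff μ hp hC₁ hC₂ hχ
  obtain ⟨G, hG, hgradient⟩ := exists_norm_gradient_radialCutoff_le (E := E)
  refine ⟨K * G, by positivity, fun {F g v z r} h R₁ R₂ γ hR₁ hR hR₂ hγ => ?_⟩
  have hgap : 0 < R₂ - R₁ := sub_pos.2 hR
  have hγ₀ : 0 ≤ γ := by linarith
  have hball : closedBall z R₂ ⊆ ball z r := closedBall_subset_ball hR₂
  set η := radialCutoff z R₁ R₂
  have hsupp : tsupport η ⊆ closedBall z R₂ := tsupport_radialCutoff_subset hR₁ hR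
  have hη : IsCutoff η (ball z r) (G / (R₂ - R₁)) :=
    { contDiff := contDiff_radialCutoff
      hasCompactSupport :=
        (isCompact_closedBall z R₂).of_isClosed_subset (isClosed_tsupport η) hsupp
      tsupport_subset := hsupp.trans hball
      nonneg := radialCutoff_nonneg
      le_one := radialCutoff_le_one
      norm_gradient_le := hgradient z hR₁ hR }
  have hrT : r⁻¹ ≤ G / (R₂ - R₁) := by
    rw [inv_eq_one_div]
    exact div_le_div₀ (by linarith) hG hgap (by linarith)
  have hv_int : IntegrableOn (fun x => v x ^ γ) (closedBall z R₂) μ :=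
    ((h.continuousOn_rpow hγ₀).mono hball).integrableOn_compact (isCompact_closedBall z R₂)
  have hv_nonneg : ∀ x ∈ closedBall z R₂, 0 ≤ v x ^ γ := fun x hx =>
    Real.rpow_nonneg (h.nonneg x (hball hx)) γ
  calc ∫ x in closedBall z R₁, v x ^ (γ * χ) ∂μ
      ≤ (K * (γ * (G / (R₂ - R₁))) * ∫ x in tsupport η, v x ^ γ ∂μ) ^ χ :=
        hstep h hη measurableSet_closedBall (fun x hx =>
          ⟨hball (closedBall_subset_closedBall hR.le hx), radialCutoff_eq_one hR₁ hR hx⟩)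
          (div_pos (by linarith) hgap) hrT hγ
    _ ≤ (K * (γ * (G / (R₂ - R₁))) * ∫ x in closedBall z R₂, v x ^ γ ∂μ) ^ χ := by
        have := setIntegral_nonneg (μ := μ) (isClosed_tsupport η).measurableSet
          fun x hx => hv_nonneg x (hsupp hx)
        have := hχ.symm.nonneg
        gcongr
        exact ae_restrict_of_forall_mem measurableSet_closedBall hv_nonneg
    _ = _ := by ring_nf

theorem isControlledSubsol_of_rpow_mul_rpow_mul_le {μ : Measure E} [IsLocallyFiniteMeasure μ]
    {p C₁ C₂ α r M B : ℝ} {F : E → E} {b v : E → ℝ} {U : Set E} (hU : IsOpen U) (hp : 1 ≤ p)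
    (hα : p - 1 ≤ α) (hα' : α ≤ p) (hr : 0 < r) (hv : ContDiffOn ℝ 1 v U) (hv₀ : ∀ x ∈ U, 0 ≤ v x)
    (hvM : ∀ x ∈ U, v x ≤ M) (hF : AEStronglyMeasurable F (μ.restrict U))
    (hcoercive : ∀ x ∈ U, C₁ * ‖gradient v x‖ ^ p ≤ ⟪gradient v x, F x⟫)
    (hgrowth : ∀ x ∈ U, ‖F x‖ ≤ C₂ * ‖gradient v x‖ ^ (p - 1))
    (hb : AEStronglyMeasurable b (μ.restrict U)) (hb₀ : ∀ᵐ x ∂μ.restrict U, 0 ≤ b x)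
    (hbB : ∀ᵐ x ∂μ.restrict U, b x ≤ B)
    (hweak : IsWeakSubsol μ F (fun x => b x * ‖gradient v x‖ ^ α) U)
    (hsmall : r ^ (p - α) * M ^ (α - p + 1) * B ≤ C₁ / 2) :
    IsControlledSubsol μ p C₁ C₂ r⁻¹ F (fun x => b x * ‖gradient v x‖ ^ α) U v where
  isOpen := hU
  contDiffOn := hv
  nonneg := hv₀
  aestronglyMeasurable_flux := hF
  coercive := hcoercive
  growth := hgrowth
  locallyIntegrableOn_source := by
    refine (locallyIntegrableOn_iff hU.isLocallyClosed).2 fun K hKU hK => ?_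
    have hgradient : ContinuousOn (fun x => ‖gradient v x‖ ^ α) K :=
      ((continuousOn_gradient hv hU).mono hKU).norm.rpow_const fun _ _ => Or.inr (by linarith)
    refine (hgradient.integrableOn_compact hK).bdd_mul (c := B) (hb.mono_set hKU) ?_
    filter_upwards [ae_restrict_of_ae_restrict_of_subset hKU hb₀,
      ae_restrict_of_ae_restrict_of_subset hKU hbB] with x hx₀ hxB
    rwa [Real.norm_of_nonneg hx₀]
  source_le := by
    filter_upwards [hb₀, hbB, ae_restrict_mem hU.measurableSet] with x hx₀ hxB hxU
    exact mul_rpow_mul_le_of_scaled_bound hp hα hα' hr hx₀ hxB (norm_nonneg _) (hv₀ x hxU)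
      (hvM x hxU) hsmall
  weak := hweak

theorem exists_le_mul_rpow_setIntegral (μ : Measure E) [μ.IsAddHaarMeasure] {p C₁ C₂ : ℝ}
    (hn : 2 ≤ Module.finrank ℝ E) (hp : 1 ≤ p) (hC₁ : 0 < C₁) (hC₂ : 0 ≤ C₂) :
    ∃ C : ℝ, 0 < C ∧ ∀ {F : E → E} {g v : E → ℝ} {z : E} {r : ℝ},
      IsControlledSubsol μ p C₁ C₂ r⁻¹ F g (ball z r) v → ∀ x₀ ∈ ball z (r / 2),
        v x₀ ≤ C * (r ^ (-(Module.finrank ℝ E : ℝ)) *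
          ∫ x in closedBall z (3 / 4 * r), v x ^ p ∂μ) ^ (1 / p) := by
  have hχ := Real.HolderConjugate.conjExponent (Nat.one_lt_cast (α := ℝ).2 hn)
  obtain ⟨K, hK, hreverse⟩ := exists_hasReverseHolder μ hp hC₁ hC₂ hχ
  have hχ₀ := hχ.symm.pos
  refine ⟨_, ?_, fun {F g v z r} h x₀ hx₀ => (hreverse h).le_mul_rpow_setIntegral
    h.contDiffOn.continuousOn h.nonneg hχ.symm (by linarith) hK hx₀⟩
  positivity

theorem stmt_13_general (μ : Measure E) [μ.IsAddHaarMeasure] {p C₁ C₂ : ℝ}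
    (hn : 2 ≤ Module.finrank ℝ E) (hp : 1 ≤ p) (hC₁ : 0 < C₁) (hC₂ : 0 ≤ C₂) :
    ∃ C : ℝ, 0 < C ∧
      ∀ {α : ℝ} {F : E → E} {b v : E → ℝ} {r : ℝ} {z : E}, p - 1 ≤ α → α ≤ p → 0 < r →
        ContDiffOn ℝ 1 v (ball z r) →
        (∀ x ∈ ball z r, 0 ≤ v x) →
        BddAbove (v '' ball z r) →
        AEStronglyMeasurable F (μ.restrict (ball z r)) →
        (∀ x ∈ ball z r, C₁ * ‖gradient v x‖ ^ p ≤ ⟪gradient v x, F x⟫) →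
        (∀ x ∈ ball z r, ‖F x‖ ≤ C₂ * ‖gradient v x‖ ^ (p - 1)) →
        AEStronglyMeasurable b (μ.restrict (ball z r)) →
        (∀ᵐ x ∂μ.restrict (ball z r), 0 ≤ b x) →
        IsBoundedUnder (· ≤ ·) (ae (μ.restrict (ball z r))) b →
        IsWeakSubsol μ F (fun x => b x * ‖gradient v x‖ ^ α) (ball z r) →
        r ^ (p - α) * sSup (v '' ball z r) ^ (α - p + 1) *
            essSup b (μ.restrict (ball z r)) ≤ C₁ / 2 →
        sSup (v '' ball z (r / 2)) ≤
          C * r ^ (-(Module.finrank ℝ E : ℝ) / p) * (∫ x in ball z r, v x ^ p ∂μ) ^ (1 / p) := by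
  obtain ⟨C, hC, hlocal⟩ := exists_le_mul_rpow_setIntegral μ hn hp hC₁ hC₂
  refine ⟨C, hC, ?_⟩
  intro α F b v r z hα hα' hr hv hv₀ hbdd hF hcoercive hgrowth hb hb₀ hbB hweak hsmall
  have hsubsol := isControlledSubsol_of_rpow_mul_rpow_mul_le isOpen_ball hp hα hα' hr hv hv₀
    (fun x hx => le_csSup hbdd (mem_image_of_mem v hx)) hF hcoercive hgrowth hb hb₀
    (ae_le_essSup hbB) hweak hsmall
  have hp₀ : 0 ≤ p := by linarith
  have hvp_nonneg : ∀ x ∈ ball z r, 0 ≤ v x ^ p := fun x hx => Real.rpow_nonneg (hv₀ x hx) p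
  have hvp_int : IntegrableOn (fun x => v x ^ p) (ball z r) μ := by
    refine IntegrableOn.of_bound measure_ball_lt_top
      ((hsubsol.continuousOn_rpow hp₀).aestronglyMeasurable measurableSet_ball)
      (sSup (v '' ball z r) ^ p)
      (ae_restrict_of_forall_mem measurableSet_ball fun x hx => ?_)
    rw [Real.norm_of_nonneg (hvp_nonneg x hx)]
    exact Real.rpow_le_rpow (hv₀ x hx) (le_csSup hbdd (mem_image_of_mem v hx)) hp₀
  refine csSup_le ((nonempty_ball.2 (half_pos hr)).image v) (forall_mem_image.2 fun x hx => ?_)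
  have hsub : closedBall z (3 / 4 * r) ⊆ ball z r := closedBall_subset_ball (by linarith)
  calc v x ≤ C * (r ^ (-(Module.finrank ℝ E : ℝ)) *
        ∫ x in closedBall z (3 / 4 * r), v x ^ p ∂μ) ^ (1 / p) := hlocal hsubsol x hx
    _ ≤ C * (r ^ (-(Module.finrank ℝ E : ℝ)) * ∫ x in ball z r, v x ^ p ∂μ) ^ (1 / p) := by
        have := setIntegral_nonneg (μ := μ) measurableSet_closedBall
          fun x hx => hvp_nonneg x (hsub hx)
        gcongr
        exact ae_restrict_of_forall_mem measurableSet_ball hvp_nonneg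
    _ = _ := by
        rw [Real.mul_rpow (by positivity) (setIntegral_nonneg measurableSet_ball hvp_nonneg),
          ← Real.rpow_mul hr.le, mul_one_div, mul_assoc]

end LocalBoundedness

section Euclidean

variable {n : ℕ} {A : Euc n → Euc n → Euc n} {b v : Euc n → ℝ} {U : Set (Euc n)}

theorem StructCond.measurable_flux {p C₁ C₂ : ℝ} (hA : StructCond A p C₁ C₂) (v : Euc n → ℝ) :
    Measurable fun x => A x (gradient v x) :=
  hA.1.comp (measurable_id.prodMk (measurable_gradient v))

theorem LocBdd.isBoundedUnder_ae_restrict (hb : LocBdd b) (hU : MeasurableSet U)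
    (hU' : Bornology.IsBounded U) : IsBoundedUnder (· ≤ ·) (ae (volume.restrict U)) b := by
  obtain ⟨B, hB⟩ := hb (closure U) hU'.isCompact_closure
  exact isBoundedUnder_of_eventually_le
    (ae_restrict_of_forall_mem hU fun x hx => hB x (subset_closure hx))

theorem IsWeakSol.isWeakSubsol {α : ℝ} (h : IsWeakSol A b α (fun _ => 0) U v) :
    IsWeakSubsol volume (fun x => A x (gradient v x)) (fun x => b x * ‖gradient v x‖ ^ α) U := by
  intro φ hφ hφc hφU hφ₀
  have := h φ hφ hφc hφU hφ₀
  simp only [zero_mul, integral_zero] at this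
  linarith

end Euclidean

/-- Lemma 4.5 (Moser's inequality): for a bounded nonnegative solution of
`div A(x,Dv) + b(x)|Dv|^α ≥ 0` in `B_r(z)` with
`r^{p-α} (sup v)^{α-p+1} (ess sup b) ≤ C₁/2`, one has
`sup_{B_{r/2}(z)} v ≤ C r^{-n/p} (∫_{B_r(z)} v^p)^{1/p}`. -/
theorem stmt_13 (n : ℕ) (hn : 2 ≤ n) (p C₁ C₂ α : ℝ) (hp : 1 < p)
    (hC₁ : 0 < C₁) (hC₂ : 0 < C₂) (hα₁ : p - 1 ≤ α) (hα₂ : α ≤ p) :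
    ∃ C : ℝ, 0 < C ∧
      ∀ (A : Euc n → Euc n → Euc n), StructCond A p C₁ C₂ →
      ∀ (b : Euc n → ℝ), Measurable b → (∀ x, 0 ≤ b x) → LocBdd b →
      ∀ (r : ℝ) (z : Euc n) (v : Euc n → ℝ), 0 < r →
        ContDiffOn ℝ 1 v (Metric.ball z r) →
        (∀ x ∈ Metric.ball z r, 0 ≤ v x) →
        BddAbove (v '' Metric.ball z r) →
        IsWeakSol A b α (fun _ => 0) (Metric.ball z r) v →
        r ^ (p - α) * sSup (v '' Metric.ball z r) ^ (α - p + 1) *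
            essSup b (volume.restrict (Metric.ball z r)) ≤ C₁ / 2 →
        sSup (v '' Metric.ball z (r / 2)) ≤
          C * r ^ (-(n : ℝ) / p) * (∫ x in Metric.ball z r, v x ^ p) ^ (1 / p) := by
  obtain ⟨C, hC, hmoser⟩ := stmt_13_general (volume : Measure (Euc n))
    (finrank_euclideanSpace_fin (𝕜 := ℝ) ▸ hn) hp.le hC₁ hC₂.le
  rw [finrank_euclideanSpace_fin] at hmoser
  refine ⟨C, hC, fun A hA b hb hb₀ hbdd r z v hr hv hv₀ hvbdd hweak => ?_⟩
  exact hmoser hα₁ hα₂ hr hv hv₀ hvbdd (hA.measurable_flux v).aestronglyMeasurable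
    (fun x _ => (hA.2 x _).1) (fun x _ => (hA.2 x _).2) hb.aestronglyMeasurable
    (.of_forall hb₀) (hbdd.isBoundedUnder_ae_restrict measurableSet_ball isBounded_ball)
    hweak.isWeakSubsol
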